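/- arXiv:2109.02835 — 2 statements merged into one kernel-verified Lean document; each statement's English description precedes it below -/
import Mathlib

section
/- Let a, b be nonnegative integers and k := a + b. Define m̃ ∈ L7(k) by: m̃((1,16)) = 0; m̃(x) = a for every x ∈ P7 with (2,9) ≤ x ≤ (2,15); m̃((1,8)) = a; m̃(x) = k for every x ∈ P7 with (2,1) ≤ x ≤ (6',11); m̃((1,0)) = k (these clauses determine m̃ at all 27 positions, and m̃ ∈ L7(k)). Let D := {c ∈ L7(k) : c((1,0)) = k, c((1,8)) = a, c((1,16)) = 0}, regarded as a poset with the induced order and with covering relations colored as in L7(k) (all colors lie in {2,3,4,5,5',6'}). Then m̃ is the unique maximal element of D, and D is isomorphic to L6(a,b) as a poset with colored covering relations, where the E7 colors 2, 3, 4, 5, 5', 6' correspond to the E6 colors 1', 2', 3', 4', 5', 6', respectively. -/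
noncomputable section

namespace CL

variable {N : Type} [DecidableEq N] [Fintype N]

/-- One-step relation generating the partial order on the poset of positions. -/
def step (adj : N → N → Prop) (pos : Finset (N × ℕ)) (x y : N × ℕ) : Prop :=
  x ∈ pos ∧ y ∈ pos ∧ adj x.1 y.1 ∧ y.2 = x.2 + 1

/-- The partial order on positions, generated by `step`. -/
def ple (adj : N → N → Prop) (pos : Finset (N × ℕ)) : N × ℕ → N × ℕ → Prop :=
  Relation.ReflTransGen (step adj pos)

/-- The lattice of `ℕ`-labellings of the positions which are bounded by `k`, order-reversing,
and satisfy a further constraint `extra`. -/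
def Elt (adj : N → N → Prop) (pos : Finset (N × ℕ)) (k : ℕ)
    (extra : ({x : N × ℕ // x ∈ pos} → ℕ) → Prop) : Type :=
  {c : {x : N × ℕ // x ∈ pos} → ℕ //
    (∀ x, c x ≤ k) ∧ (∀ x y, ple adj pos y.1 x.1 → c x ≤ c y) ∧ extra c}

variable {adj : N → N → Prop} {pos : Finset (N × ℕ)} {k : ℕ}
  {extra : ({x : N × ℕ // x ∈ pos} → ℕ) → Prop}

instance : Finite (Elt adj pos k extra) := by
  apply Finite.of_injective
    (fun c : Elt adj pos k extra =>
      fun x => (⟨c.1 x, Nat.lt_succ_of_le (c.2.1 x)⟩ : Fin (k + 1)))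
  intro c d h
  apply Subtype.ext
  funext x
  exact congrArg Fin.val (congrFun h x)

instance : Fintype (Elt adj pos k extra) := Fintype.ofFinite _

instance : DecidableEq (Elt adj pos k extra) := by unfold Elt; infer_instance

/-- Componentwise comparison of labellings. -/
def elLe (r s : Elt adj pos k extra) : Prop := ∀ x, r.1 x ≤ s.1 x

/-- The covering edge of color `i`: exactly one entry, at a position of color `i`,
is increased by one. -/
def edge (i : N) (r s : Elt adj pos k extra) : Prop :=
  ∃ x : {x : N × ℕ // x ∈ pos}, x.1.1 = i ∧ s.1 x = r.1 x + 1 ∧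
    ∀ y, y ≠ x → s.1 y = r.1 y

instance (i : N) (r s : Elt adj pos k extra) : Decidable (edge i r s) := by
  unfold edge; infer_instance

/-- The rank function: the sum of all entries. -/
def rk (t : Elt adj pos k extra) : ℕ := ∑ x ∈ pos.attach, t.1 x

/-- The connected component of `t` in the graph of color-`i` covering edges. -/
def comp (i : N) (t : Elt adj pos k extra) : Set (Elt adj pos k extra) :=
  {s | Relation.ReflTransGen (fun a b => edge i a b ∨ edge i b a) t s}

/-- The integer `m_i(t) = (ρ(t) − min ρ on comp_i(t)) − (max ρ on comp_i(t) − ρ(t))`. -/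
def mwt (i : N) (t : Elt adj pos k extra) : ℤ :=
  ((rk t : ℤ) - ((sInf (rk '' comp i t) : ℕ) : ℤ)) -
    (((sSup (rk '' comp i t) : ℕ) : ℤ) - (rk t : ℤ))

end CL

/-! ### Type `E₇` data -/

/-- The nodes `1, 2, 3, 4, 5, 5', 6'` of the `E₇` Dynkin diagram. -/
inductive N7 : Type
  | n1 | n2 | n3 | n4 | n5 | n5p | n6p
  deriving DecidableEq

instance : Fintype N7 where
  elems := {.n1, .n2, .n3, .n4, .n5, .n5p, .n6p}
  complete := by intro x; cases x <;> decide

open N7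

/-- Adjacency in the `E₇` Dynkin diagram: edges `1-2, 2-3, 3-4, 4-5, 4-5', 5'-6'`. -/
abbrev adj7 : N7 → N7 → Prop := fun a b =>
  (a, b) ∈ ([(n1, n2), (n2, n3), (n3, n4), (n4, n5), (n4, n5p), (n5p, n6p)] : List (N7 × N7)) ∨
  (b, a) ∈ ([(n1, n2), (n2, n3), (n3, n4), (n4, n5), (n4, n5p), (n5p, n6p)] : List (N7 × N7))

/-- The 27 (color, rank) positions of the minuscule poset `P₇ = P_{E₇}(ω₁)`. -/
def pos7 : Finset (N7 × ℕ) :=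
  {(n1, 0), (n2, 1), (n3, 2), (n4, 3), (n5, 4), (n5p, 4), (n4, 5), (n6p, 5), (n3, 6),
   (n5p, 6), (n2, 7), (n4, 7), (n1, 8), (n3, 8), (n5, 8), (n2, 9), (n4, 9), (n3, 10),
   (n5p, 10), (n4, 11), (n6p, 11), (n5, 12), (n5p, 12), (n4, 13), (n3, 14), (n2, 15), (n1, 16)}

/-- The lattice `L7(k) = L_{E₇}(kω₁)` of order-reversing labellings of `P₇` by `{0,…,k}`. -/
abbrev L7 (k : ℕ) : Type := CL.Elt adj7 pos7 k (fun _ => True)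

/-- The Cartan matrix of type `E₇`, indexed by the nodes. -/
def A7 : N7 → N7 → ℤ := fun i j => if i = j then 2 else if adj7 i j then -1 else 0

/-! ### Type `E₆` data -/

/-- The nodes `1', 2', 3', 4', 5', 6'` of the `E₆` Dynkin diagram. -/
inductive N6 : Type
  | m1 | m2 | m3 | m4 | m5 | m6
  deriving DecidableEq

instance : Fintype N6 where
  elems := {.m1, .m2, .m3, .m4, .m5, .m6}
  complete := by intro x; cases x <;> decide

open N6

/-- Adjacency in the `E₆` Dynkin diagram: edges `1'-2', 2'-3', 3'-4', 3'-5', 5'-6'`. -/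
abbrev adj6 : N6 → N6 → Prop := fun a b =>
  (a, b) ∈ ([(m1, m2), (m2, m3), (m3, m4), (m3, m5), (m5, m6)] : List (N6 × N6)) ∨
  (b, a) ∈ ([(m1, m2), (m2, m3), (m3, m4), (m3, m5), (m5, m6)] : List (N6 × N6))

/-- The Cartan matrix of type `E₆`, indexed by the nodes. -/
def A6 : N6 → N6 → ℤ := fun i j => if i = j then 2 else if adj6 i j then -1 else 0

/-- The 24 (color, rank) positions of the poset `P24 = 𝒫`. -/
def pos24 : Finset (N6 × ℕ) :=
  {(m1, 0), (m2, 1), (m3, 2), (m4, 3), (m5, 3), (m3, 4), (m6, 4), (m2, 5), (m5, 5),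
   (m1, 6), (m3, 6), (m2, 7), (m4, 7), (m1, 8), (m3, 8), (m2, 9), (m5, 9), (m3, 10),
   (m6, 10), (m4, 11), (m5, 11), (m3, 12), (m2, 13), (m1, 14)}

/-- The 16 (color, rank) positions of the minuscule poset `P16' = P_{E₆}(ω₁')`. -/
def pos16p : Finset (N6 × ℕ) :=
  {(m6, 0), (m5, 1), (m3, 2), (m2, 3), (m4, 3), (m1, 4), (m3, 4), (m2, 5), (m5, 5),
   (m3, 6), (m6, 6), (m4, 7), (m5, 7), (m3, 8), (m2, 9), (m1, 10)}

/-- The 16 (color, rank) positions of the minuscule poset `P16'' = P_{E₆}(ω₆')`. -/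
def pos16pp : Finset (N6 × ℕ) :=
  {(m1, 0), (m2, 1), (m3, 2), (m4, 3), (m5, 3), (m3, 4), (m6, 4), (m2, 5), (m5, 5),
   (m1, 6), (m3, 6), (m2, 7), (m4, 7), (m3, 8), (m5, 9), (m6, 10)}

/-- The extra constraints on elements of `L6(a,b)`: `c((1',8)) ≤ a` and `c((1',6)) ≥ a`. -/
def extra6 (a : ℕ) : ({x : N6 × ℕ // x ∈ pos24} → ℕ) → Prop := fun c =>
  c ⟨(m1, 8), by decide⟩ ≤ a ∧ a ≤ c ⟨(m1, 6), by decide⟩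

/-- The lattice `L6(a,b) = L_{E₆}(aω₁' + bω₆')`. -/
abbrev L6ab (a b : ℕ) : Type := CL.Elt adj6 pos24 (a + b) (extra6 a)

/-- The lattice `L6'(k) = L_{E₆}(kω₁')`. -/
abbrev L6p (k : ℕ) : Type := CL.Elt adj6 pos16p k (fun _ => True)

/-- The lattice `L6''(k) = L_{E₆}(kω₆')`. -/
abbrev L6pp (k : ℕ) : Type := CL.Elt adj6 pos16pp k (fun _ => True)

/-- The defining clauses for the element `m̃` of `L7(a+b)`. -/
def clauses14 (a b : ℕ) (mt : L7 (a + b)) : Prop :=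
  mt.1 ⟨(n1, 16), by decide⟩ = 0 ∧
  (∀ x : {x : N7 × ℕ // x ∈ pos7},
    CL.ple adj7 pos7 (n2, 9) x.1 → CL.ple adj7 pos7 x.1 (n2, 15) → mt.1 x = a) ∧
  mt.1 ⟨(n1, 8), by decide⟩ = a ∧
  (∀ x : {x : N7 × ℕ // x ∈ pos7},
    CL.ple adj7 pos7 (n2, 1) x.1 → CL.ple adj7 pos7 x.1 (n6p, 11) → mt.1 x = a + b) ∧
  mt.1 ⟨(n1, 0), by decide⟩ = a + b

/-- The set `D`: elements of `L7(a+b)` with prescribed values at the three color-1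
positions. -/
def D14 (a b : ℕ) : Type :=
  {c : L7 (a + b) // c.1 ⟨(n1, 0), by decide⟩ = a + b ∧ c.1 ⟨(n1, 8), by decide⟩ = a ∧
    c.1 ⟨(n1, 16), by decide⟩ = 0}

/-!
The order of `P₇` is a light-cone order: `x ≤ y` iff the rank difference is at least the distance
of the two colors in the Dynkin diagram. Hence an element of `D`, whose values at `(1,0)`, `(1,8)`,
`(1,16)` are `a + b`, `a`, `0`, is bounded at `x` by the value at the last of these positions whose
cone contains `x`; these bounds form the labelling `m̃`.

Deleting the three positions of color `1` from `P₇` and lowering the ranks by one leaves `P24`. The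
only steps lost in the deletion are those through `(1,0)`, `(1,8)` and `(1,16)`; the first and the
last of these only bound the labels by `a + b` and `0`, and the steps
`(2,7) → (1,8) → (2,9)` are the two extra inequalities in the definition of `L6(a,b)`. So
restriction to `P24` is the required isomorphism.
-/

namespace CL

section Order

variable {N : Type} {adj : N → N → Prop} {pos : Finset (N × ℕ)}

theorem le_of_ple {α : Type*} [Preorder α] {c : pos → α}
    (hc : ∀ x y : pos, step adj pos x y → c y ≤ c x) {x y : pos} (h : ple adj pos x y) :
    c y ≤ c x := by
  suffices ∀ z, ple adj pos x z → ∀ hz : z ∈ pos, c ⟨z, hz⟩ ≤ c x from this y h y.2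
  intro z hxz
  induction hxz with
  | refl => exact fun _ => le_rfl
  | tail _ hstep ih => exact fun hz => (hc ⟨_, hstep.1⟩ ⟨_, hz⟩ hstep).trans (ih hstep.1)

theorem ple_iff_add_dist_le {dist : N → N → ℕ} (dist_self : ∀ i, dist i i = 0)
    (dist_adj : ∀ i j l, adj i j → dist l j ≤ dist l i + 1)
    (exists_succ : ∀ x ∈ pos, ∀ y ∈ pos, x ≠ y → x.2 + dist x.1 y.1 ≤ y.2 →
      ∃ i, adj x.1 i ∧ x.2 + 1 + dist i y.1 ≤ y.2 ∧ (i, x.2 + 1) ∈ pos)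
    {x y : N × ℕ} (hx : x ∈ pos) (hy : y ∈ pos) :
    ple adj pos x y ↔ x.2 + dist x.1 y.1 ≤ y.2 := by
  constructor
  · intro h
    clear hy
    induction h with
    | refl => simp only [dist_self, add_zero, le_refl]
    | tail _ hstep ih =>
      have := dist_adj _ _ x.1 hstep.2.2.1
      have := hstep.2.2.2
      omega
  · intro h
    induction hn : y.2 - x.2 using Nat.strong_induction_on generalizing x with
    | _ n ih =>
      by_cases hxy : x = y
      · exact hxy ▸ Relation.ReflTransGen.refl
      · obtain ⟨i, hadj, hle, hi⟩ := exists_succ x hx y hy hxy h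
        exact (ih (y.2 - (x.2 + 1)) (by omega) hi hle rfl).head ⟨hx, hi, hadj, rfl⟩

end Order

section Comap

variable {N N' : Type} {adj : N → N → Prop} {adj' : N' → N' → Prop}
  {pos : Finset (N × ℕ)} {pos' : Finset (N' × ℕ)} {k : ℕ}
  {extra : (pos → ℕ) → Prop} {extra' : (pos' → ℕ) → Prop}

/-- The pullback of a labelling along an order-preserving map of positions. The constraint
`extra'` on the pullback is supplied separately for each labelling. -/
def Elt.comap (φ : pos' → pos) (hφ : ∀ x y : pos', ple adj' pos' x y → ple adj pos (φ x) (φ y))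
    (c : Elt adj pos k extra) (hc : extra' (c.1 ∘ φ)) : Elt adj' pos' k extra' :=
  ⟨c.1 ∘ φ, fun _ => c.2.1 _, fun _ _ h => c.2.2.1 _ _ (hφ _ _ h), hc⟩

variable {φ : pos' → pos} {hφ : ∀ x y : pos', ple adj' pos' x y → ple adj pos (φ x) (φ y)}
  {c d : Elt adj pos k extra} {hc : extra' (c.1 ∘ φ)} {hd : extra' (d.1 ∘ φ)}

theorem eq_of_comap_eq_comap (hcd : Set.EqOn c.1 d.1 (Set.range φ)ᶜ)
    (h : c.comap φ hφ hc = d.comap φ hφ hd) : c = d := by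
  refine Subtype.ext (funext fun x => ?_)
  by_cases hx : x ∈ Set.range φ
  · obtain ⟨y, rfl⟩ := hx
    exact congrFun (congrArg Subtype.val h) y
  · exact hcd hx

theorem elLe_comap_iff (hcd : Set.EqOn c.1 d.1 (Set.range φ)ᶜ) :
    elLe (c.comap φ hφ hc) (d.comap φ hφ hd) ↔ elLe c d := by
  refine ⟨fun h x => ?_, fun h y => h (φ y)⟩
  by_cases hx : x ∈ Set.range φ
  · obtain ⟨y, rfl⟩ := hx
    exact h y
  · exact (hcd hx).le

theorem edge_comap_iff (hφ_inj : Function.Injective φ) {col : N' → N}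
    (hcol : Function.Injective col) (hφ_col : ∀ y, (φ y).1.1 = col y.1.1)
    (hcd : Set.EqOn c.1 d.1 (Set.range φ)ᶜ) (i : N') :
    edge i (c.comap φ hφ hc) (d.comap φ hφ hd) ↔ edge (col i) c d := by
  constructor
  · rintro ⟨y, rfl, hy, hne⟩
    refine ⟨φ y, hφ_col y, hy, fun x hx => ?_⟩
    by_cases hx' : x ∈ Set.range φ
    · obtain ⟨z, rfl⟩ := hx'
      exact hne z (ne_of_apply_ne φ hx)
    · exact (hcd hx').symm
  · rintro ⟨x, hxi, hx, hne⟩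
    obtain ⟨y, rfl⟩ : x ∈ Set.range φ := by
      by_contra hx'
      have := hcd hx'
      omega
    exact ⟨y, hcol ((hφ_col y).symm.trans hxi), hx, fun z hz => hne _ (hφ_inj.ne hz)⟩

end Comap

end CL

open CL

section OrderP7

/-- The distance in the `E₇` Dynkin diagram, computed from an isometric embedding of this tree into
the plane with the sup metric: the first coordinate is the distance to node `1`, and the second
differs from it only by reflecting node `5` in node `4`. -/
def dist7 (i j : N7) : ℕ :=
  max (Nat.dist (coord₁ i) (coord₁ j)) (Nat.dist (coord₂ i) (coord₂ j))
where
  coord₁ : N7 → ℕ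
    | n1 => 0 | n2 => 1 | n3 => 2 | n4 => 3 | n5 => 4 | n5p => 4 | n6p => 5
  coord₂ : N7 → ℕ
    | n1 => 0 | n2 => 1 | n3 => 2 | n4 => 3 | n5 => 2 | n5p => 4 | n6p => 5

theorem dist7_le_dist7_add_one_of_adj7 : ∀ i j l, adj7 i j → dist7 l j ≤ dist7 l i + 1 := by
  decide

set_option maxRecDepth 100000 in
theorem exists_succ_of_add_dist7_le : ∀ x ∈ pos7, ∀ y ∈ pos7, x ≠ y →
    x.2 + dist7 x.1 y.1 ≤ y.2 →
      ∃ i, adj7 x.1 i ∧ x.2 + 1 + dist7 i y.1 ≤ y.2 ∧ (i, x.2 + 1) ∈ pos7 := by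
  decide

theorem ple_pos7_iff {x y : N7 × ℕ} (hx : x ∈ pos7) (hy : y ∈ pos7) :
    ple adj7 pos7 x y ↔ x.2 + dist7 x.1 y.1 ≤ y.2 :=
  ple_iff_add_dist_le (by decide) dist7_le_dist7_add_one_of_adj7 exists_succ_of_add_dist7_le hx hy

set_option maxRecDepth 100000 in
theorem pos7_fst_eq_n1_iff : ∀ x ∈ pos7, x.1 = n1 ↔ x = (n1, 0) ∨ x = (n1, 8) ∨ x = (n1, 16) := by
  decide

set_option maxRecDepth 100000 in
theorem pos7_snd_lt_of_fst_ne_n1 : ∀ x ∈ pos7, x.1 ≠ n1 → x.2 < 16 + dist7 n1 x.1 := by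
  decide

set_option maxRecDepth 100000 in
theorem mem_interval_n2_9_n2_15_iff {x : N7 × ℕ} (hx : x ∈ pos7) :
    ple adj7 pos7 (n2, 9) x ∧ ple adj7 pos7 x (n2, 15) ↔ x.1 ≠ n1 ∧ 8 + dist7 n1 x.1 ≤ x.2 := by
  rw [ple_pos7_iff (by decide) hx, ple_pos7_iff hx (by decide)]
  revert x
  decide

set_option maxRecDepth 100000 in
theorem mem_interval_n2_1_n6p_11_iff {x : N7 × ℕ} (hx : x ∈ pos7) :
    ple adj7 pos7 (n2, 1) x ∧ ple adj7 pos7 x (n6p, 11) ↔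
      x.1 ≠ n1 ∧ x.2 < 8 + dist7 n1 x.1 := by
  rw [ple_pos7_iff (by decide) hx, ple_pos7_iff hx (by decide)]
  revert x
  decide

end OrderP7

section Maximum

variable {a b : ℕ}

/-- The values of `m̃`: the three cases are the positions above `(1,16)`, the remaining ones above
`(1,8)`, and all others. -/
def mTildeLabel (a b : ℕ) (x : N7 × ℕ) : ℕ :=
  if 16 + dist7 n1 x.1 ≤ x.2 then 0 else if 8 + dist7 n1 x.1 ≤ x.2 then a else a + b

theorem mTildeLabel_le (x : N7 × ℕ) : mTildeLabel a b x ≤ a + b := by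
  unfold mTildeLabel
  split_ifs <;> omega

theorem mTildeLabel_le_of_step {x y : N7 × ℕ} (h : step adj7 pos7 x y) :
    mTildeLabel a b y ≤ mTildeLabel a b x := by
  have hdist := dist7_le_dist7_add_one_of_adj7 _ _ n1 h.2.2.1
  have hrank := h.2.2.2
  unfold mTildeLabel
  split_ifs <;> omega

/-- The element `m̃` of `L7(a+b)`. -/
def mTilde (a b : ℕ) : L7 (a + b) :=
  ⟨fun x => mTildeLabel a b x, fun _ => mTildeLabel_le _,
    fun _ _ h => le_of_ple (fun _ _ => mTildeLabel_le_of_step) h, trivial⟩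

theorem clauses14_mTilde : clauses14 a b (mTilde a b) := by
  refine ⟨rfl, fun x h₁ h₂ => ?_, rfl, fun x h₁ h₂ => ?_, rfl⟩
  · obtain ⟨hcol, hle⟩ := (mem_interval_n2_9_n2_15_iff x.2).1 ⟨h₁, h₂⟩
    have hlt := pos7_snd_lt_of_fst_ne_n1 _ x.2 hcol
    exact (if_neg hlt.not_ge).trans (if_pos hle)
  · obtain ⟨hcol, hlt₈⟩ := (mem_interval_n2_1_n6p_11_iff x.2).1 ⟨h₁, h₂⟩
    have hlt := pos7_snd_lt_of_fst_ne_n1 _ x.2 hcol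
    exact (if_neg hlt.not_ge).trans (if_neg hlt₈.not_ge)

theorem clauses14_unique {s t : L7 (a + b)} (hs : clauses14 a b s) (ht : clauses14 a b t) :
    s = t := by
  obtain ⟨hs₁₆, hs_mid, hs₈, hs_low, hs₀⟩ := hs
  obtain ⟨ht₁₆, ht_mid, ht₈, ht_low, ht₀⟩ := ht
  refine Subtype.ext (funext fun ⟨x, hx⟩ => ?_)
  by_cases hcol : x.1 = n1
  · obtain rfl | rfl | rfl := (pos7_fst_eq_n1_iff x hx).1 hcol
    · exact hs₀.trans ht₀.symm
    · exact hs₈.trans ht₈.symm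
    · exact hs₁₆.trans ht₁₆.symm
  · obtain hle | hlt := le_or_gt (8 + dist7 n1 x.1) x.2
    · obtain ⟨h₁, h₂⟩ := (mem_interval_n2_9_n2_15_iff hx).2 ⟨hcol, hle⟩
      exact (hs_mid _ h₁ h₂).trans (ht_mid _ h₁ h₂).symm
    · obtain ⟨h₁, h₂⟩ := (mem_interval_n2_1_n6p_11_iff hx).2 ⟨hcol, hlt⟩
      exact (hs_low _ h₁ h₂).trans (ht_low _ h₁ h₂).symm

theorem elLe_mTilde (c : D14 a b) : elLe c.1 (mTilde a b) := by
  obtain ⟨c, -, h₈, h₁₆⟩ := c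
  intro x
  change c.1 x ≤ mTildeLabel a b x
  unfold mTildeLabel
  split_ifs with hx₁₆ hx₈
  · exact (c.2.2.1 x ⟨(n1, 16), _⟩ ((ple_pos7_iff (by decide) x.2).2 hx₁₆)).trans h₁₆.le
  · exact (c.2.2.1 x ⟨(n1, 8), _⟩ ((ple_pos7_iff (by decide) x.2).2 hx₈)).trans h₈.le
  · exact c.2.1 x

end Maximum

section Shift

/-- The embedding of the `E₆` Dynkin diagram into the `E₇` one as the complement of node `1`. -/
def nodeEmb : N6 ↪ N7 where
  toFun
    | m1 => n2 | m2 => n3 | m3 => n4 | m4 => n5 | m5 => n5p | m6 => n6p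
  inj' := by decide

/-- The map on positions inducing the embedding of `P24` into `P₇`. -/
def shift : N6 × ℕ ↪ N7 × ℕ :=
  nodeEmb.prodMap (addRightEmbedding 1)

theorem adj7_nodeEmb_iff : ∀ i j, adj7 (nodeEmb i) (nodeEmb j) ↔ adj6 i j := by
  decide

set_option maxRecDepth 100000 in
theorem map_shift_pos24 : pos24.map shift = {x ∈ pos7 | x.1 ≠ n1} := by
  decide

theorem shift_mem_pos7_iff {x : N6 × ℕ} : shift x ∈ pos7 ↔ x ∈ pos24 := by
  have hcol : nodeEmb x.1 ≠ n1 := by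
    generalize x.1 = i
    revert i
    decide
  rw [← Finset.mem_map' shift, map_shift_pos24, Finset.mem_filter]
  exact (and_iff_left hcol).symm

theorem step_shift_iff {x y : N6 × ℕ} :
    step adj7 pos7 (shift x) (shift y) ↔ step adj6 pos24 x y :=
  and_congr shift_mem_pos7_iff <| and_congr shift_mem_pos7_iff <|
    and_congr (adj7_nodeEmb_iff _ _) Nat.succ_inj

theorem ple_shift {x y : N6 × ℕ} (h : ple adj6 pos24 x y) :
    ple adj7 pos7 (shift x) (shift y) :=
  h.lift shift fun _ _ => step_shift_iff.2

/-- The embedding of `P24` into `P₇`. -/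
def shiftPos : pos24 ↪ pos7 :=
  shift.subtypeMap fun _ => shift_mem_pos7_iff.2

theorem mem_range_shiftPos_iff {x : pos7} : x ∈ Set.range shiftPos ↔ x.1.1 ≠ n1 := by
  have h : x.1 ∈ pos24.map shift ↔ x.1.1 ≠ n1 := by
    rw [map_shift_pos24, Finset.mem_filter, and_iff_right x.2]
  rw [← h, Finset.mem_map]
  exact ⟨fun ⟨y, hy⟩ => ⟨y.1, y.2, congrArg Subtype.val hy⟩,
    fun ⟨y, hy, hyx⟩ => ⟨⟨y, hy⟩, Subtype.ext hyx⟩⟩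

set_option maxRecDepth 100000 in
theorem step_pos7_cases : ∀ x ∈ pos7, ∀ y ∈ pos7, adj7 x.1 y.1 → y.2 = x.2 + 1 →
    x = (n1, 0) ∨ y = (n1, 16) ∨ (x = (n2, 7) ∧ y = (n1, 8)) ∨ (x = (n1, 8) ∧ y = (n2, 9)) ∨
      (x.1 ≠ n1 ∧ y.1 ≠ n1) := by
  decide

end Shift

section Isomorphism

variable {a b : ℕ}

theorem eqOn_mTilde_iff {c : L7 (a + b)} :
    Set.EqOn c.1 (mTilde a b).1 (Set.range shiftPos)ᶜ ↔
      c.1 ⟨(n1, 0), by decide⟩ = a + b ∧ c.1 ⟨(n1, 8), by decide⟩ = a ∧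
        c.1 ⟨(n1, 16), by decide⟩ = 0 := by
  have mem_compl {x : pos7} : x ∈ (Set.range shiftPos)ᶜ ↔ x.1.1 = n1 :=
    mem_range_shiftPos_iff.not_left
  constructor
  · exact fun h => ⟨h (mem_compl.2 rfl), h (mem_compl.2 rfl), h (mem_compl.2 rfl)⟩
  · rintro ⟨h₀, h₈, h₁₆⟩ ⟨x, hx⟩ hcol
    obtain rfl | rfl | rfl := (pos7_fst_eq_n1_iff x hx).1 (mem_compl.1 hcol)
    · exact h₀
    · exact h₈
    · exact h₁₆

theorem D14.eqOn_compl_range_shiftPos (c d : D14 a b) :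
    Set.EqOn c.1.1 d.1.1 (Set.range shiftPos)ᶜ :=
  (eqOn_mTilde_iff.2 c.2).trans (eqOn_mTilde_iff.2 d.2).symm

theorem extra6_comp_shiftPos (c : D14 a b) : extra6 a (c.1.1 ∘ shiftPos) := by
  obtain ⟨c, -, h₈, -⟩ := c
  have h₉ : c.1 ⟨(n2, 9), by decide⟩ ≤ c.1 ⟨(n1, 8), by decide⟩ :=
    c.2.2.1 _ _ (.single ⟨by decide, by decide, by decide, rfl⟩)
  have h₇ : c.1 ⟨(n1, 8), by decide⟩ ≤ c.1 ⟨(n2, 7), by decide⟩ :=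
    c.2.2.1 _ _ (.single ⟨by decide, by decide, by decide, rfl⟩)
  exact ⟨h₉.trans h₈.le, h₈.ge.trans h₇⟩

/-- Restriction from `P₇` to `P24`, the isomorphism from `D` to `L6(a,b)`. -/
def D14.restrict (c : D14 a b) : L6ab a b :=
  c.1.comap shiftPos (fun _ _ => ple_shift) (extra6_comp_shiftPos c)

/-- The extension of a labelling of `P24` to `P₇` by the values of `m̃` at the positions of
color `1`. -/
def extendLabel (e : L6ab a b) : pos7 → ℕ :=
  Function.extend shiftPos e.1 (mTilde a b).1

theorem extendLabel_shiftPos (e : L6ab a b) (y : pos24) : extendLabel e (shiftPos y) = e.1 y :=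
  shiftPos.injective.extend_apply _ _ y

theorem extendLabel_of_fst_eq_n1 (e : L6ab a b) (x : pos7) (hx : x.1.1 = n1) :
    extendLabel e x = mTildeLabel a b x :=
  Function.extend_apply' _ _ _ fun h => mem_range_shiftPos_iff.1 h hx

theorem extendLabel_le (e : L6ab a b) (x : pos7) : extendLabel e x ≤ a + b := by
  by_cases hx : x.1.1 = n1
  · exact (extendLabel_of_fst_eq_n1 e x hx).trans_le (mTildeLabel_le _)
  · obtain ⟨y, rfl⟩ := mem_range_shiftPos_iff.2 hx
    exact (extendLabel_shiftPos e y).trans_le (e.2.1 y)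

theorem extendLabel_le_of_step (e : L6ab a b) (x y : pos7) (h : step adj7 pos7 x y) :
    extendLabel e y ≤ extendLabel e x := by
  obtain ⟨x, hx⟩ := x
  obtain ⟨y, hy⟩ := y
  obtain rfl | rfl | ⟨rfl, rfl⟩ | ⟨rfl, rfl⟩ | ⟨hx', hy'⟩ :=
    step_pos7_cases x hx y hy h.2.2.1 h.2.2.2
  · exact (extendLabel_le e _).trans_eq (extendLabel_of_fst_eq_n1 e ⟨_, hx⟩ rfl).symm
  · exact (extendLabel_of_fst_eq_n1 e _ rfl).trans_le (Nat.zero_le _)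
  · calc extendLabel e ⟨(n1, 8), hy⟩
      _ = a := extendLabel_of_fst_eq_n1 e _ rfl
      _ ≤ e.1 ⟨(m1, 6), by decide⟩ := e.2.2.2.2
      _ = extendLabel e ⟨(n2, 7), hx⟩ := (extendLabel_shiftPos e ⟨(m1, 6), _⟩).symm
  · calc extendLabel e ⟨(n2, 9), hy⟩
      _ = e.1 ⟨(m1, 8), by decide⟩ := extendLabel_shiftPos e ⟨(m1, 8), _⟩
      _ ≤ a := e.2.2.2.1
      _ = extendLabel e ⟨(n1, 8), hx⟩ := (extendLabel_of_fst_eq_n1 e ⟨_, hx⟩ rfl).symm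
  · obtain ⟨u, hu⟩ := mem_range_shiftPos_iff (x := ⟨x, hx⟩).2 hx'
    obtain ⟨v, hv⟩ := mem_range_shiftPos_iff (x := ⟨y, hy⟩).2 hy'
    rw [← hu, ← hv] at h ⊢
    rw [extendLabel_shiftPos, extendLabel_shiftPos]
    exact e.2.2.1 _ _ (.single (step_shift_iff.1 h))

/-- The inverse of `D14.restrict`. -/
def L6ab.extend (e : L6ab a b) : D14 a b :=
  ⟨⟨extendLabel e, extendLabel_le e, fun _ _ => le_of_ple (extendLabel_le_of_step e), trivial⟩,
    extendLabel_of_fst_eq_n1 e _ rfl, extendLabel_of_fst_eq_n1 e _ rfl,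
    extendLabel_of_fst_eq_n1 e _ rfl⟩

theorem D14.restrict_bijective : Function.Bijective (D14.restrict : D14 a b → L6ab a b) :=
  ⟨fun c d h => Subtype.ext (eq_of_comap_eq_comap (c.eqOn_compl_range_shiftPos d) h),
    fun e => ⟨L6ab.extend e, Subtype.ext (funext (extendLabel_shiftPos e))⟩⟩

theorem elLe_restrict_iff (c d : D14 a b) : elLe c.restrict d.restrict ↔ elLe c.1 d.1 :=
  elLe_comap_iff (c.eqOn_compl_range_shiftPos d)

theorem edge_restrict_iff (i : N6) (c d : D14 a b) :
    edge i c.restrict d.restrict ↔ edge (nodeEmb i) c.1 d.1 :=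
  edge_comap_iff shiftPos.injective nodeEmb.injective (fun _ => rfl)
    (c.eqOn_compl_range_shiftPos d) i

end Isomorphism

/-- the clauses determine a unique element `m̃ ∈ L7(a+b)`, which is the
unique maximal element of `D`, and `D` is isomorphic to `L6(a,b)` as a poset with colored
covering relations (with `E₇` colors `2,3,4,5,5',6'` matching `E₆` colors
`1',2',3',4',5',6'`). -/
theorem statement_14 (a b : ℕ) :
    ∃ mt : L7 (a + b), clauses14 a b mt ∧ (∀ mt' : L7 (a + b), clauses14 a b mt' → mt' = mt) ∧
      (∀ c : D14 a b, CL.elLe c.1 mt) ∧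
      ∃ f : D14 a b → L6ab a b, Function.Bijective f ∧
        (∀ c d : D14 a b, CL.elLe c.1 d.1 ↔ CL.elLe (f c) (f d)) ∧
        ∀ c d : D14 a b,
          (CL.edge n2 c.1 d.1 ↔ CL.edge m1 (f c) (f d)) ∧
          (CL.edge n3 c.1 d.1 ↔ CL.edge m2 (f c) (f d)) ∧
          (CL.edge n4 c.1 d.1 ↔ CL.edge m3 (f c) (f d)) ∧
          (CL.edge n5 c.1 d.1 ↔ CL.edge m4 (f c) (f d)) ∧
          (CL.edge n5p c.1 d.1 ↔ CL.edge m5 (f c) (f d)) ∧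
          (CL.edge n6p c.1 d.1 ↔ CL.edge m6 (f c) (f d)) := by
  refine ⟨mTilde a b, clauses14_mTilde, fun _ ht => clauses14_unique ht clauses14_mTilde,
    elLe_mTilde, D14.restrict, D14.restrict_bijective, fun c d => (elLe_restrict_iff c d).symm,
    fun c d => ?_⟩
  have hedge (i : N6) : edge (nodeEmb i) c.1 d.1 ↔ edge i c.restrict d.restrict :=
    (edge_restrict_iff i c d).symm
  exact ⟨hedge m1, hedge m2, hedge m3, hedge m4, hedge m5, hedge m6⟩

end
end

section
/- Fix a nonnegative integer k. Let m' ∈ L7(k) be given by m'((1,16)) = 0 and m'(x) = k for all other x ∈ P7, and let D' := {c ∈ L7(k) : c((1,16)) = 0, c((1,8)) = k, c((1,0)) = k}. Let m'' ∈ L7(k) be given by m''(x) = 0 for every x ∈ P7 with x ≥ (1,8) and m''(x) = k for every x ∈ P7 with x ≤ (6',11) (these clauses determine m'' at all 27 positions), and let D'' := {c ∈ L7(k) : c((1,16)) = 0, c((1,8)) = 0, c((1,0)) = k}. Regard D' and D'' as posets with the induced order and with covering relations colored as in L7(k) (all colors lie in {2,3,4,5,5',6'}). Then m' is the unique maximal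 element of D' and m'' is the unique maximal element of D''; and, under the correspondence sending the E7 colors 2, 3, 4, 5, 5', 6' to the E6 colors 1', 2', 3', 4', 5', 6' respectively, D' is isomorphic to L6'(k) and D'' is isomorphic to L6''(k) as posets with colored covering relations. -/
noncomputable section

open N7

open N6

/-- The set `D'`. -/
def D15p (k : ℕ) : Type :=
  {c : L7 k // c.1 ⟨(n1, 16), by decide⟩ = 0 ∧ c.1 ⟨(n1, 8), by decide⟩ = k ∧
    c.1 ⟨(n1, 0), by decide⟩ = k}

/-- The set `D''`. -/
def D15pp (k : ℕ) : Type :=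
  {c : L7 k // c.1 ⟨(n1, 16), by decide⟩ = 0 ∧ c.1 ⟨(n1, 8), by decide⟩ = 0 ∧
    c.1 ⟨(n1, 0), by decide⟩ = k}

/-- The defining clauses for the element `m''` of `L7(k)`. -/
def clauses15pp (k : ℕ) (mt : L7 k) : Prop :=
  (∀ x : {x : N7 × ℕ // x ∈ pos7}, CL.ple adj7 pos7 (n1, 8) x.1 → mt.1 x = 0) ∧
  (∀ x : {x : N7 × ℕ // x ∈ pos7}, CL.ple adj7 pos7 x.1 (n6p, 11) → mt.1 x = k)

/-! Both `D'` and `D''` consist of the labellings `c` of `P₇` with `c a = 0` and `c b = k` for two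
positions `a`, `b`: these are `(1,16)`, `(1,8)` for `D'` and `(1,8)`, `(1,0)` for `D''`. Such a
labelling vanishes on the filter `↑a` and equals `k` on the ideal `↓b`, so it is determined by its
restriction to the complement of `↑a ∪ ↓b`, and every order-reversing labelling of that complement
extends. After recoloring and a shift of the ranks, the complement is `P₁₆'`, respectively `P₁₆''`.
The largest labelling vanishing at `a` is `0` on `↑a` and `k` elsewhere. -/

namespace CL

section Decidability

variable {N : Type} {adj : N → N → Prop} {pos : Finset (N × ℕ)}

/-- `StepChain adj pos n x y` says that `y` is reached from `x` by exactly `n` generating steps.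
Since a step raises the rank by one, this turns the generated order `ple` into a bounded search,
which makes it decidable. -/
def StepChain (adj : N → N → Prop) (pos : Finset (N × ℕ)) : ℕ → N × ℕ → N × ℕ → Prop
  | 0, x, y => x = y
  | n + 1, x, y => ∃ z ∈ pos, step adj pos x z ∧ StepChain adj pos n z y

instance [DecidableEq N] [DecidableRel adj] : DecidableRel (step adj pos) :=
  fun _ _ => inferInstanceAs (Decidable (_ ∧ _ ∧ _ ∧ _))

instance StepChain.decidable [DecidableEq N] [DecidableRel adj] :
    ∀ n x y, Decidable (StepChain adj pos n x y)
  | 0, x, y => inferInstanceAs (Decidable (x = y))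
  | n + 1, x, y =>
    have := fun z => StepChain.decidable n z y
    inferInstanceAs (Decidable (∃ z ∈ pos, step adj pos x z ∧ StepChain adj pos n z y))

theorem StepChain.ple {n : ℕ} {x y : N × ℕ} (h : StepChain adj pos n x y) : ple adj pos x y := by
  induction n generalizing x with
  | zero => exact h ▸ .refl
  | succ n ih =>
    obtain ⟨z, -, hxz, hzy⟩ := h
    exact .head hxz (ih hzy)

theorem ple.exists_stepChain {x y : N × ℕ} (h : ple adj pos x y) :
    ∃ n, y.2 = x.2 + n ∧ StepChain adj pos n x y := by
  induction h using Relation.ReflTransGen.head_induction_on with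
  | refl => exact ⟨0, rfl, rfl⟩
  | head hxz _ ih =>
    obtain ⟨n, hn, hzy⟩ := ih
    exact ⟨n + 1, by rw [hn, hxz.2.2.2]; ring, _, hxz.2.1, hxz, hzy⟩

theorem ple_iff_stepChain {x y : N × ℕ} :
    ple adj pos x y ↔ x.2 ≤ y.2 ∧ StepChain adj pos (y.2 - x.2) x y := by
  refine ⟨fun h => ?_, fun h => h.2.ple⟩
  obtain ⟨n, hn, hxy⟩ := h.exists_stepChain
  rw [hn, Nat.add_sub_cancel_left]
  exact ⟨Nat.le_add_right _ _, hxy⟩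

instance [DecidableEq N] [DecidableRel adj] : DecidableRel (ple adj pos) :=
  fun _ _ => decidable_of_iff' _ ple_iff_stepChain

end Decidability

/-- The lattice `L(P, k)` of all order-reversing labellings of the positions by `{0, …, k}`. -/
abbrev Labelling {N : Type} (adj : N → N → Prop) (pos : Finset (N × ℕ)) (k : ℕ) : Type :=
  Elt adj pos k fun _ => True

section Slice

variable {N : Type} {adj : N → N → Prop} {pos : Finset (N × ℕ)}

/-- The labelling which is `0` on the filter generated by `a` and `k` everywhere else; it is
the largest labelling which vanishes at `a`. -/
def cutoff (k : ℕ) (a : {x // x ∈ pos}) : Labelling adj pos k :=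
  open Classical in
  ⟨fun x => if ple adj pos a.1 x.1 then 0 else k,
    fun x => by
      dsimp only
      split_ifs <;> omega,
    fun x y hyx => by
      dsimp only
      split_ifs with hax hay hay
      · exact le_rfl
      · exact Nat.zero_le k
      · exact absurd (hay.trans hyx) hax
      · exact le_rfl,
    trivial⟩

/-- The labellings with the smallest possible value at `a` and the largest possible value at `b`;
both `D'` and `D''` are of this form. -/
def slice (k : ℕ) (a b : {x // x ∈ pos}) : Set (Labelling adj pos k) :=
  {c | c.1 a = 0 ∧ c.1 b = k}

variable {k : ℕ}

theorem cutoff_of_ple {a x : {x // x ∈ pos}} (h : ple adj pos a.1 x.1) :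
    (cutoff k a : Labelling adj pos k).1 x = 0 :=
  if_pos h

theorem cutoff_of_not_ple {a x : {x // x ∈ pos}} (h : ¬ple adj pos a.1 x.1) :
    (cutoff k a : Labelling adj pos k).1 x = k :=
  if_neg h

theorem eq_cutoff_iff {a : {x // x ∈ pos}} {c : Labelling adj pos k} :
    c = cutoff k a ↔ (∀ x, ple adj pos a.1 x.1 → c.1 x = 0) ∧
      ∀ x, ¬ple adj pos a.1 x.1 → c.1 x = k := by
  constructor
  · rintro rfl
    exact ⟨fun _ => cutoff_of_ple, fun _ => cutoff_of_not_ple⟩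
  · rintro ⟨h0, hk⟩
    refine Subtype.ext (funext fun x => ?_)
    by_cases hx : ple adj pos a.1 x.1
    · rw [h0 x hx, cutoff_of_ple hx]
    · rw [hk x hx, cutoff_of_not_ple hx]

theorem apply_eq_zero_of_ple {a x : {x // x ∈ pos}} {c : Labelling adj pos k} (ha : c.1 a = 0)
    (hax : ple adj pos a.1 x.1) : c.1 x = 0 :=
  Nat.eq_zero_of_le_zero (ha ▸ c.2.2.1 x a hax)

theorem apply_eq_of_ple {b x : {x // x ∈ pos}} {c : Labelling adj pos k} (hb : c.1 b = k)
    (hxb : ple adj pos x.1 b.1) : c.1 x = k :=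
  (c.2.1 x).antisymm (hb.symm.trans_le (c.2.2.1 b x hxb))

theorem elLe_cutoff {a : {x // x ∈ pos}} {c : Labelling adj pos k} (ha : c.1 a = 0) :
    elLe c (cutoff k a) := fun x => by
  by_cases hx : ple adj pos a.1 x.1
  · exact (apply_eq_zero_of_ple ha hx).trans_le (Nat.zero_le _)
  · exact (c.2.1 x).trans_eq (cutoff_of_not_ple hx).symm

theorem apply_eq_cutoff_of_mem_slice {a b x : {x // x ∈ pos}} {c : Labelling adj pos k}
    (hc : c ∈ slice k a b) (hx : ple adj pos a.1 x.1 ∨ ple adj pos x.1 b.1) :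
    c.1 x = (cutoff k a : Labelling adj pos k).1 x := by
  by_cases hax : ple adj pos a.1 x.1
  · rw [apply_eq_zero_of_ple hc.1 hax, cutoff_of_ple hax]
  · rw [apply_eq_of_ple hc.2 (hx.resolve_left hax), cutoff_of_not_ple hax]

end Slice

section Restrict

variable {M N : Type} {adjM : M → M → Prop} {adjN : N → N → Prop}
  {Q : Finset (M × ℕ)} {P : Finset (N × ℕ)} {k : ℕ}
  (g : Subrel (ple adjM Q) (· ∈ Q) ↪r Subrel (ple adjN P) (· ∈ P))

/-- The restriction of a labelling of `P` along an order embedding of `Q` into `P`. -/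
def restrict (c : Labelling adjN P k) : Labelling adjM Q k :=
  ⟨fun x => c.1 (g x), fun x => c.2.1 (g x),
    fun x y hyx => c.2.2.1 (g x) (g y) (g.map_rel_iff.2 hyx), trivial⟩

variable {g} {a b : {x // x ∈ P}}

theorem extend_cutoff_antitone
    (hg : ∀ x, (∃ y, g y = x) ↔ ¬ple adjN P a.1 x.1 ∧ ¬ple adjN P x.1 b.1)
    (c : Labelling adjM Q k) {x y : {x // x ∈ P}} (hyx : ple adjN P y.1 x.1) :
    Function.extend g c.1 (cutoff k a : Labelling adjN P k).1 x ≤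
      Function.extend g c.1 (cutoff k a : Labelling adjN P k).1 y := by
  by_cases hx : ∃ x', g x' = x <;> by_cases hy : ∃ y', g y' = y
  · obtain ⟨x', rfl⟩ := hx
    obtain ⟨y', rfl⟩ := hy
    simpa only [g.injective.extend_apply] using c.2.2.1 x' y' (g.map_rel_iff.1 hyx)
  · have hay : ¬ple adjN P a.1 y.1 := fun h => ((hg x).1 hx).1 (h.trans hyx)
    obtain ⟨x', rfl⟩ := hx
    rw [g.injective.extend_apply, Function.extend_apply' _ _ _ hy, cutoff_of_not_ple hay]
    exact c.2.1 x'
  · have hxb : ¬ple adjN P x.1 b.1 := fun h => ((hg y).1 hy).2 (hyx.trans h)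
    have hax : ple adjN P a.1 x.1 := not_not.1 fun h => hx ((hg x).2 ⟨h, hxb⟩)
    rw [Function.extend_apply' _ _ _ hx, cutoff_of_ple hax]
    exact Nat.zero_le _
  · rw [Function.extend_apply' _ _ _ hx, Function.extend_apply' _ _ _ hy]
    exact (cutoff k a).2.2.1 x y hyx

theorem surjOn_restrict_slice
    (hg : ∀ x, (∃ y, g y = x) ↔ ¬ple adjN P a.1 x.1 ∧ ¬ple adjN P x.1 b.1)
    (hab : ¬ple adjN P a.1 b.1) :
    Set.SurjOn (restrict g) (slice k a b) Set.univ := by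
  intro c _
  let e : {x // x ∈ P} → ℕ := Function.extend g c.1 (cutoff k a : Labelling adjN P k).1
  have e_apply (y) : e (g y) = c.1 y := g.injective.extend_apply _ _ y
  have e_outside {x} (hx : ple adjN P a.1 x.1 ∨ ple adjN P x.1 b.1) :
      e x = (cutoff k a : Labelling adjN P k).1 x :=
    Function.extend_apply' _ _ _ fun h => not_or.2 ((hg x).1 h) hx
  have e_le (x) : e x ≤ k := by
    by_cases hx : ∃ y, g y = x
    · obtain ⟨y, rfl⟩ := hx
      exact (e_apply y).trans_le (c.2.1 y)
    · exact (Function.extend_apply' _ _ _ hx).trans_le ((cutoff k a).2.1 x)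
  refine ⟨⟨e, e_le, fun _ _ => extend_cutoff_antitone hg c, trivial⟩, ⟨?_, ?_⟩, ?_⟩
  · exact (e_outside (.inl .refl)).trans (cutoff_of_ple .refl)
  · exact (e_outside (.inr .refl)).trans (cutoff_of_not_ple hab)
  · exact Subtype.ext (funext e_apply)

section EqOutside

variable {c d : Labelling adjN P k}

theorem eq_of_restrict_eq (h : ∀ x, (¬∃ y, g y = x) → c.1 x = d.1 x)
    (hcd : restrict g c = restrict g d) : c = d := by
  refine Subtype.ext (funext fun x => ?_)
  by_cases hx : ∃ y, g y = x
  · obtain ⟨y, rfl⟩ := hx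
    exact congrFun (congrArg Subtype.val hcd) y
  · exact h x hx

theorem elLe_restrict_iff (h : ∀ x, (¬∃ y, g y = x) → c.1 x = d.1 x) :
    elLe (restrict g c) (restrict g d) ↔ elLe c d := by
  refine ⟨fun hcd x => ?_, fun hcd y => hcd (g y)⟩
  by_cases hx : ∃ y, g y = x
  · obtain ⟨y, rfl⟩ := hx
    exact hcd y
  · exact (h x hx).le

theorem edge_restrict_iff {φ : M ↪ N} (hφ : ∀ x, (g x).1.1 = φ x.1.1)
    (h : ∀ x, (¬∃ y, g y = x) → c.1 x = d.1 x) (i : M) :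
    edge i (restrict g c) (restrict g d) ↔ edge (φ i) c d := by
  constructor
  · rintro ⟨y, rfl, hy, hne⟩
    refine ⟨g y, hφ y, hy, fun x hx => ?_⟩
    by_cases hxg : ∃ z, g z = x
    · obtain ⟨z, rfl⟩ := hxg
      exact hne z fun hzy => hx (congrArg g hzy)
    · exact (h x hxg).symm
  · rintro ⟨x, hi, hx, hne⟩
    have hxg : ∃ y, g y = x := by
      by_contra hxg
      have := h x hxg
      omega
    obtain ⟨y, rfl⟩ := hxg
    exact ⟨y, φ.injective ((hφ y).symm.trans hi), hx,
      fun z hz => hne (g z) (g.injective.ne hz)⟩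

end EqOutside

/-- Let `D` carry the order and the colored covering relations induced by `ι : D → L(P, k)`. Then
`f : D → L(Q, k)` is an isomorphism of posets with colored covering relations, the color `i` of `Q`
corresponding to the color `φ i` of `P`. -/
structure IsColoredIso {D : Type} (φ : M → N) (ι : D → Labelling adjN P k)
    (f : D → Labelling adjM Q k) : Prop where
  bijective : Function.Bijective f
  elLe_iff : ∀ c d, elLe (ι c) (ι d) ↔ elLe (f c) (f d)
  edge_iff : ∀ i c d, edge (φ i) (ι c) (ι d) ↔ edge i (f c) (f d)

theorem isColoredIso_restrict {φ : M ↪ N} (hφ : ∀ x, (g x).1.1 = φ x.1.1)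
    (hg : ∀ x, (∃ y, g y = x) ↔ ¬ple adjN P a.1 x.1 ∧ ¬ple adjN P x.1 b.1)
    (hab : ¬ple adjN P a.1 b.1) {D : Type} {ι : D → Labelling adjN P k}
    (hι : Function.Injective ι) (hD : Set.range ι = slice k a b) :
    IsColoredIso φ ι fun c => restrict g (ι c) := by
  have eq_outside (c d : D) (x) (hx : ¬∃ y, g y = x) : (ι c).1 x = (ι d).1 x := by
    have mem_slice (c : D) : ι c ∈ slice k a b := hD ▸ Set.mem_range_self c
    rw [hg, not_and_or, not_not, not_not] at hx
    rw [apply_eq_cutoff_of_mem_slice (mem_slice c) hx,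
      apply_eq_cutoff_of_mem_slice (mem_slice d) hx]
  refine ⟨⟨fun c d hcd => hι (eq_of_restrict_eq (eq_outside c d) hcd), fun e => ?_⟩,
    fun c d => (elLe_restrict_iff (eq_outside c d)).symm,
    fun i c d => (edge_restrict_iff hφ (eq_outside c d) i).symm⟩
  obtain ⟨c, hc, rfl⟩ := surjOn_restrict_slice hg hab (Set.mem_univ e)
  obtain ⟨d, rfl⟩ := hD.symm ▸ hc
  exact ⟨d, rfl⟩

/-- The order embedding of positions which recolors along `φ` and raises the rank by `s`. -/
def shiftEmbedding (φ : M ↪ N) (s : ℕ) (hP : ∀ x ∈ Q, (φ x.1, x.2 + s) ∈ P)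
    (hle : ∀ x ∈ Q, ∀ y ∈ Q,
      ple adjN P (φ x.1, x.2 + s) (φ y.1, y.2 + s) ↔ ple adjM Q x y) :
    Subrel (ple adjM Q) (· ∈ Q) ↪r Subrel (ple adjN P) (· ∈ P) where
  toFun x := ⟨(φ x.1.1, x.1.2 + s), hP x.1 x.2⟩
  inj' x y h := by
    have hxy : (φ x.1.1, x.1.2 + s) = (φ y.1.1, y.1.2 + s) := congrArg Subtype.val h
    rw [Prod.mk.injEq, φ.apply_eq_iff_eq, Nat.add_right_cancel_iff] at hxy
    exact Subtype.ext (Prod.ext hxy.1 hxy.2)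
  map_rel_iff' {x y} := hle x.1 x.2 y.1 y.2

end Restrict

end CL

open CL

/-- The correspondence of the colors `1', …, 6'` of `E₆` with the colors `2, 3, 4, 5, 5', 6'` of
`E₇`. -/
def colorEmbedding : N6 ↪ N7 where
  toFun
    | m1 => n2
    | m2 => n3
    | m3 => n4
    | m4 => n5
    | m5 => n5p
    | m6 => n6p
  inj' := by decide

/-- `P16'` as the part of `P7` which is neither above `(1,16)` nor below `(1,8)`. -/
def embeddingP : Subrel (ple adj6 pos16p) (· ∈ pos16p) ↪r Subrel (ple adj7 pos7) (· ∈ pos7) :=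
  shiftEmbedding colorEmbedding 5 (by decide +kernel) (by decide +kernel)

/-- `P16''` as the part of `P7` which is neither above `(1,8)` nor below `(1,0)`. -/
def embeddingPP : Subrel (ple adj6 pos16pp) (· ∈ pos16pp) ↪r Subrel (ple adj7 pos7) (· ∈ pos7) :=
  shiftEmbedding colorEmbedding 1 (by decide +kernel) (by decide +kernel)

theorem exists_embeddingP_eq_iff : ∀ x : {x // x ∈ pos7}, (∃ y, embeddingP y = x) ↔
    ¬ple adj7 pos7 (n1, 16) x.1 ∧ ¬ple adj7 pos7 x.1 (n1, 8) := by
  decide +kernel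

theorem exists_embeddingPP_eq_iff : ∀ x : {x // x ∈ pos7}, (∃ y, embeddingPP y = x) ↔
    ¬ple adj7 pos7 (n1, 8) x.1 ∧ ¬ple adj7 pos7 x.1 (n1, 0) := by
  decide +kernel

theorem ple_n1_16_iff : ∀ x : {x // x ∈ pos7},
    ple adj7 pos7 (n1, 16) x.1 ↔ x = ⟨(n1, 16), by decide⟩ := by
  decide +kernel

theorem cutoff_n1_16_apply (k : ℕ) (x : {x // x ∈ pos7}) :
    (cutoff k ⟨(n1, 16), by decide⟩ : L7 k).1 x = if x = ⟨(n1, 16), by decide⟩ then 0 else k := by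
  split_ifs with hx
  · exact cutoff_of_ple ((ple_n1_16_iff x).2 hx)
  · exact cutoff_of_not_ple (mt (ple_n1_16_iff x).1 hx)

theorem not_ple_n1_8_iff : ∀ x : {x // x ∈ pos7},
    ¬ple adj7 pos7 (n1, 8) x.1 ↔ ple adj7 pos7 x.1 (n6p, 11) := by
  decide +kernel

theorem clauses15pp_iff_eq_cutoff {k : ℕ} {c : L7 k} :
    clauses15pp k c ↔ c = cutoff k ⟨(n1, 8), by decide⟩ := by
  simp only [clauses15pp, eq_cutoff_iff, not_ple_n1_8_iff]

theorem isColoredIso_D15p (k : ℕ) :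
    IsColoredIso colorEmbedding (fun c : D15p k => c.1) fun c => restrict embeddingP c.1 := by
  refine isColoredIso_restrict (a := ⟨(n1, 16), by decide⟩) (b := ⟨(n1, 8), by decide⟩)
    (fun _ => rfl) exists_embeddingP_eq_iff (by decide +kernel) Subtype.val_injective ?_
  refine Subtype.range_val.trans (Set.ext fun c => ⟨fun h => ⟨h.1, h.2.1⟩, fun h => ?_⟩)
  exact ⟨h.1, h.2, apply_eq_of_ple h.2 (by decide +kernel)⟩

theorem isColoredIso_D15pp (k : ℕ) :
    IsColoredIso colorEmbedding (fun c : D15pp k => c.1) fun c => restrict embeddingPP c.1 := by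
  refine isColoredIso_restrict (a := ⟨(n1, 8), by decide⟩) (b := ⟨(n1, 0), by decide⟩)
    (fun _ => rfl) exists_embeddingPP_eq_iff (by decide +kernel) Subtype.val_injective ?_
  refine Subtype.range_val.trans (Set.ext fun c => ⟨fun h => ⟨h.2.1, h.2.2⟩, fun h => ?_⟩)
  exact ⟨apply_eq_zero_of_ple h.1 (by decide +kernel), h.1, h.2⟩

/-- `m'` is the unique maximal element of `D'` and `m''` of `D''`, and,
matching `E₇` colors `2,3,4,5,5',6'` with `E₆` colors `1',…,6'`, `D' ≅ L6'(k)` and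
`D'' ≅ L6''(k)` as posets with colored covering relations. -/
theorem statement_15 (k : ℕ) :
    (∃ mp : L7 k,
      (∀ x : {x : N7 × ℕ // x ∈ pos7},
        mp.1 x = if x = (⟨(n1, 16), by decide⟩ : {x : N7 × ℕ // x ∈ pos7}) then 0 else k) ∧
      (∀ c : D15p k, CL.elLe c.1 mp) ∧
      ∃ f : D15p k → L6p k, Function.Bijective f ∧
        (∀ c d : D15p k, CL.elLe c.1 d.1 ↔ CL.elLe (f c) (f d)) ∧
        ∀ c d : D15p k,
          (CL.edge n2 c.1 d.1 ↔ CL.edge m1 (f c) (f d)) ∧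
          (CL.edge n3 c.1 d.1 ↔ CL.edge m2 (f c) (f d)) ∧
          (CL.edge n4 c.1 d.1 ↔ CL.edge m3 (f c) (f d)) ∧
          (CL.edge n5 c.1 d.1 ↔ CL.edge m4 (f c) (f d)) ∧
          (CL.edge n5p c.1 d.1 ↔ CL.edge m5 (f c) (f d)) ∧
          (CL.edge n6p c.1 d.1 ↔ CL.edge m6 (f c) (f d))) ∧
    (∃ mpp : L7 k, clauses15pp k mpp ∧ (∀ mt' : L7 k, clauses15pp k mt' → mt' = mpp) ∧
      (∀ c : D15pp k, CL.elLe c.1 mpp) ∧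
      ∃ f : D15pp k → L6pp k, Function.Bijective f ∧
        (∀ c d : D15pp k, CL.elLe c.1 d.1 ↔ CL.elLe (f c) (f d)) ∧
        ∀ c d : D15pp k,
          (CL.edge n2 c.1 d.1 ↔ CL.edge m1 (f c) (f d)) ∧
          (CL.edge n3 c.1 d.1 ↔ CL.edge m2 (f c) (f d)) ∧
          (CL.edge n4 c.1 d.1 ↔ CL.edge m3 (f c) (f d)) ∧
          (CL.edge n5 c.1 d.1 ↔ CL.edge m4 (f c) (f d)) ∧
          (CL.edge n5p c.1 d.1 ↔ CL.edge m5 (f c) (f d)) ∧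
          (CL.edge n6p c.1 d.1 ↔ CL.edge m6 (f c) (f d))) := by
  have isoP := isColoredIso_D15p k
  have isoPP := isColoredIso_D15pp k
  refine ⟨⟨cutoff k ⟨(n1, 16), by decide⟩, cutoff_n1_16_apply k,
    fun c => elLe_cutoff c.2.1, _, isoP.bijective, isoP.elLe_iff, fun c d => ?_⟩,
    ⟨cutoff k ⟨(n1, 8), by decide⟩, clauses15pp_iff_eq_cutoff.2 rfl,
    fun _ => clauses15pp_iff_eq_cutoff.1, fun c => elLe_cutoff c.2.2.1, _, isoPP.bijective,
    isoPP.elLe_iff, fun c d => ?_⟩⟩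
  · exact ⟨isoP.edge_iff m1 c d, isoP.edge_iff m2 c d, isoP.edge_iff m3 c d,
      isoP.edge_iff m4 c d, isoP.edge_iff m5 c d, isoP.edge_iff m6 c d⟩
  · exact ⟨isoPP.edge_iff m1 c d, isoPP.edge_iff m2 c d, isoPP.edge_iff m3 c d,
      isoPP.edge_iff m4 c d, isoPP.edge_iff m5 c d, isoPP.edge_iff m6 c d⟩

end
end
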